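/- arXiv:math-ph/0406022 — 4 statements merged into one kernel-verified Lean document; each statement's English description precedes it below -/
import Mathlib

section
/- For every positive integer n and every sequence (E_i)_{i∈ℕ} of real numbers whose set of values C = {E_i : i ∈ ℕ} has no accumulation point in ℝ, there exist a real-analytic function f : ℝⁿ → ℝ and a bijection φ : ℕⁿ → ℕ such that f(I) = E_{φ(I)} for every multi-index I ∈ ℕⁿ (where ℕⁿ is regarded as a subset of ℝⁿ via the natural embedding). -/
/-!
The sequence `E` may be prescribed along any bijection `ℕⁿ ≃ ℕ`. For distinct primes `pⱼ`, the
analytic function `x ↦ ∏ⱼ pⱼ ^ xⱼ` maps `ℕⁿ` injectively into `ℕ` by unique factorization, which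
reduces the problem to interpolating arbitrary values at the natural numbers by an analytic
function of one variable. An entire interpolating function is a series whose `k`-th term vanishes at
the first `k` nodes and corrects the partial sum at the `k`-th node `w`; multiplying that term by a
high power of `z / w` makes it as small as desired on any disc around `0` that misses `w`.
-/

open Filter Finset

section Peak

variable {𝕜 : Type*} [NontriviallyNormedField 𝕜]

theorem exists_differentiable_eq_one_norm_le {w : 𝕜} {r ε : ℝ} (hr : r < ‖w‖) (hε : 0 < ε) :
    ∃ g : 𝕜 → 𝕜, Differentiable 𝕜 g ∧ g w = 1 ∧ ∀ z, ‖z‖ ≤ r → ‖g z‖ ≤ ε := by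
  rcases lt_or_ge r 0 with hr_neg | hr_nonneg
  · exact ⟨1, differentiable_const 1, rfl,
      fun z hz => absurd (hz.trans_lt hr_neg) (norm_nonneg z).not_gt⟩
  have hw_pos : 0 < ‖w‖ := hr_nonneg.trans_lt hr
  obtain ⟨N, hN⟩ := exists_pow_lt_of_lt_one hε ((div_lt_one hw_pos).mpr hr)
  refine ⟨fun z => (z / w) ^ N, by fun_prop, ?_, fun z hz => ?_⟩
  · simp only [div_self (norm_pos_iff.mp hw_pos), one_pow]
  · calc ‖(z / w) ^ N‖ = (‖z‖ / ‖w‖) ^ N := by rw [norm_pow, norm_div]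
      _ ≤ (r / ‖w‖) ^ N := by gcongr
      _ ≤ ε := hN.le

theorem exists_differentiable_interpolating_norm_le [ProperSpace 𝕜] {F : Type*}
    [NormedAddCommGroup F] [NormedSpace 𝕜 F] {ι : Type*} {s : Finset ι} {w : ι → 𝕜}
    (hw : Set.InjOn w s) {i : ι} (hi : i ∈ s) (c : F) {r ε : ℝ} (hr : r < ‖w i‖) (hε : 0 < ε) :
    ∃ t : 𝕜 → F, Differentiable 𝕜 t ∧ (∀ j ∈ s, j ≠ i → t (w j) = 0) ∧ t (w i) = c ∧
      ∀ z, ‖z‖ ≤ r → ‖t z‖ ≤ ε := by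
  classical
  let b : 𝕜 → F := fun z => (Lagrange.basis s w i).eval z • c
  have hb : Differentiable 𝕜 b := (Lagrange.basis s w i).differentiable.smul_const c
  obtain ⟨M, hM⟩ := (isCompact_closedBall (0 : 𝕜) r).exists_bound_of_continuousOn
    hb.continuous.continuousOn
  obtain ⟨g, hg, hg_node, hg_le⟩ :=
    exists_differentiable_eq_one_norm_le hr (show 0 < ε / (|M| + 1) by positivity)
  refine ⟨fun z => g z • b z, hg.smul hb, fun j hj hji => ?_, ?_, fun z hz => ?_⟩
  · simp only [b, Lagrange.eval_basis_of_ne hji.symm hj, zero_smul, smul_zero]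
  · simp only [b, Lagrange.eval_basis_self hw hi, hg_node, one_smul]
  · have hbz : ‖b z‖ ≤ |M| + 1 := by
      linarith [hM z (mem_closedBall_zero_iff.mpr hz), le_abs_self M]
    calc ‖g z • b z‖ = ‖g z‖ * ‖b z‖ := norm_smul _ _
      _ ≤ ε / (|M| + 1) * (|M| + 1) := by gcongr; exact hg_le z hz
      _ = ε := div_mul_cancel₀ _ (by positivity)

end Peak

section Triangular

variable {G : Type*} [AddCommGroup G]

/-- The solution `c` of the lower triangular system `∑ j ≤ k, A j k (c j) = a k` with identity
diagonal `A k k = id`, by forward substitution. The entries `A j k` are arbitrary maps, not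
necessarily additive. -/
def forwardSubstitution (A : ℕ → ℕ → G → G) (a : ℕ → G) : ℕ → G
  | k => a k - ∑ j : Fin k, A j k (forwardSubstitution A a j)

theorem sum_range_succ_forwardSubstitution {A : ℕ → ℕ → G → G} (hA : ∀ k c, A k k c = c)
    (a : ℕ → G) (k : ℕ) :
    ∑ j ∈ range (k + 1), A j k (forwardSubstitution A a j) = a k := by
  rw [sum_range_succ, hA, forwardSubstitution,
    Fin.sum_univ_eq_sum_range (fun j => A j k (forwardSubstitution A a j)) k, add_sub_cancel]

end Triangular

section Entire

variable {F : Type*} [NormedAddCommGroup F] [NormedSpace ℂ F] [CompleteSpace F]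

theorem differentiable_tsum_of_norm_le_on_exhausting_balls {ι : Type*} {t : ι → ℂ → F}
    (ht : ∀ i, Differentiable ℂ (t i)) {u r : ι → ℝ} (hu : Summable u)
    (hr : Tendsto r cofinite atTop) (htu : ∀ i z, ‖z‖ ≤ r i → ‖t i z‖ ≤ u i) :
    Differentiable ℂ fun z => ∑' i, t i z := by
  rw [← differentiableOn_univ]
  refine SummableLocallyUniformlyOn.differentiableOn isOpen_univ ?_ fun i z _ => ht i z
  refine SummableLocallyUniformlyOn.of_locally_bounded_eventually isOpen_univ fun K _ hK => ?_
  obtain ⟨R, hR⟩ := hK.isBounded.exists_norm_le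
  refine ⟨u, hu, ?_⟩
  filter_upwards [hr.eventually_ge_atTop R] with i hi z hz
  exact htu i z ((hR z hz).trans hi)

theorem exists_differentiable_forall_apply_eq {w : ℕ → ℂ} (hw : Function.Injective w)
    (hw_lim : Tendsto (fun k => ‖w k‖) atTop atTop) (a : ℕ → F) :
    ∃ g : ℂ → F, Differentiable ℂ g ∧ ∀ k, g (w k) = a k := by
  have exists_term (k : ℕ) (c : F) := exists_differentiable_interpolating_norm_le
    hw.injOn (self_mem_range_succ k) c (sub_one_lt ‖w k‖) (show (0 : ℝ) < (1 / 2) ^ k by positivity)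
  choose T hT_diff hT_zero hT_node hT_le using exists_term
  let A : ℕ → ℕ → F → F := fun j k x => T j x (w k)
  let c : ℕ → F := forwardSubstitution A a
  refine ⟨fun z => ∑' k, T k (c k) z, ?_, fun k => ?_⟩
  · refine differentiable_tsum_of_norm_le_on_exhausting_balls (fun k => hT_diff k (c k))
      summable_geometric_two ?_ fun k => hT_le k (c k)
    rw [Nat.cofinite_eq_atTop]
    exact tendsto_atTop_add_const_right _ (-1) hw_lim
  · have later_terms_vanish : ∀ j ∉ range (k + 1), T j (c j) (w k) = 0 := by
      intro j hj
      have hkj : k < j := by simpa using hj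
      exact hT_zero j (c j) k (mem_range.mpr (by lia)) hkj.ne
    calc ∑' j, T j (c j) (w k) = ∑ j ∈ range (k + 1), T j (c j) (w k) :=
          tsum_eq_sum later_terms_vanish
      _ = a k := sum_range_succ_forwardSubstitution (A := A) hT_node a k

end Entire

theorem exists_analyticAt_forall_apply_eq {x : ℕ → ℝ} (hx : Function.Injective x)
    (hx_lim : Tendsto (fun k => ‖x k‖) atTop atTop) (a : ℕ → ℝ) :
    ∃ g : ℝ → ℝ, (∀ y, AnalyticAt ℝ g y) ∧ ∀ k, g (x k) = a k := by
  obtain ⟨g, hg, hga⟩ := exists_differentiable_forall_apply_eq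
    (w := fun k => (x k : ℂ)) (Complex.ofReal_injective.comp hx)
    (by simpa only [Complex.norm_real] using hx_lim) fun k => (a k : ℂ)
  refine ⟨fun y => (g y).re, fun y => (hg.analyticAt y).re_ofReal, fun k => ?_⟩
  simp only [hga, Complex.ofReal_re]

section PrimePowers

variable {ι : Type*} [Fintype ι]

theorem prod_prime_pow_injective {p : ι → ℕ} (hp : ∀ j, (p j).Prime)
    (hp_inj : Function.Injective p) :
    Function.Injective fun I : ι → ℕ => ∏ j, p j ^ I j := by
  classical
  have factorization_apply (I : ι → ℕ) (i : ι) : (∏ j, p j ^ I j).factorization (p i) = I i := by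
    rw [Nat.factorization_prod fun j _ => pow_ne_zero _ (hp j).ne_zero]
    simp [(hp _).factorization, Finsupp.single_apply, hp_inj.eq_iff]
  intro I J hIJ
  funext i
  rw [← factorization_apply I i, ← factorization_apply J i]
  exact congrArg (fun m : ℕ => m.factorization (p i)) hIJ

theorem analyticAt_prod_const_rpow {b : ι → ℝ} (hb : ∀ j, 0 < b j) (x : ι → ℝ) :
    AnalyticAt ℝ (fun y : ι → ℝ => ∏ j, b j ^ y j) x := by
  refine Finset.analyticAt_fun_prod _ fun j _ => ?_
  simp only [Real.rpow_def_of_pos (hb j)]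
  have analyticAt_coord : AnalyticAt ℝ (fun y : ι → ℝ => y j) x :=
    (ContinuousLinearMap.proj (R := ℝ) (φ := fun _ : ι => ℝ) j).analyticAt x
  exact (analyticAt_const.mul analyticAt_coord).rexp

variable (ι) in
theorem exists_analyticAt_injective_natCast :
    ∃ (P : (ι → ℝ) → ℝ) (m : (ι → ℕ) → ℕ), (∀ x, AnalyticAt ℝ P x) ∧ Function.Injective m ∧
      ∀ I : ι → ℕ, P (fun j => (I j : ℝ)) = m I := by
  obtain ⟨e⟩ : Nonempty (ι ↪ ℕ) := nonempty_embedding_nat ι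
  let p : ι → ℕ := fun j => Nat.nth Nat.Prime (e j)
  have hp (j : ι) : (p j).Prime := Nat.prime_nth_prime (e j)
  have hp_inj : Function.Injective p :=
    (Nat.nth_injective Nat.infinite_setOfPred_prime).comp e.injective
  refine ⟨fun x => ∏ j, (p j : ℝ) ^ x j, fun I => ∏ j, p j ^ I j,
    analyticAt_prod_const_rpow fun j => Nat.cast_pos.mpr (hp j).pos,
    prod_prime_pow_injective hp hp_inj, fun I => ?_⟩
  simp only [Real.rpow_natCast, Nat.cast_prod, Nat.cast_pow]

theorem analytic_function_realizing_sequence_general (a : (ι → ℕ) → ℝ) :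
    ∃ f : (ι → ℝ) → ℝ, (∀ x, AnalyticAt ℝ f x) ∧ ∀ I : ι → ℕ, f (fun j => (I j : ℝ)) = a I := by
  obtain ⟨P, m, hP, hm, hPm⟩ := exists_analyticAt_injective_natCast ι
  obtain ⟨g, hg, hga⟩ := exists_analyticAt_forall_apply_eq (x := fun k : ℕ => (k : ℝ))
    Nat.cast_injective (tendsto_norm_atTop_atTop.comp tendsto_natCast_atTop_atTop)
    (Function.extend m a 0)
  refine ⟨fun x => g (P x), fun x => (hg (P x)).comp (hP x), fun I => ?_⟩
  simp only [hPm, hga, hm.extend_apply]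

end PrimePowers

/-- If the set of values of the sequence `(E i)` has no accumulation point
in `ℝ`, then the interpolating function `f : ℝⁿ → ℝ` with `f I = E (φ I)` for all
multi-indices `I ∈ ℕⁿ` (for some bijection `φ : ℕⁿ → ℕ`) can be chosen real-analytic. -/
theorem analytic_function_realizing_sequence (n : ℕ) (hn : 0 < n) (E : ℕ → ℝ)
    (hE : ∀ x : ℝ, ∃ U ∈ nhds x, (U ∩ Set.range E).Finite) :
    ∃ (f : (Fin n → ℝ) → ℝ) (φ : (Fin n → ℕ) ≃ ℕ),
      (∀ x : Fin n → ℝ, AnalyticAt ℝ f x) ∧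
      ∀ I : Fin n → ℕ, f (fun j => (I j : ℝ)) = E (φ I) := by
  have : Nonempty (Fin n) := Fin.pos_iff_nonempty.mp hn
  obtain ⟨φ⟩ : Nonempty ((Fin n → ℕ) ≃ ℕ) := nonempty_equiv_of_countable
  exact (analytic_function_realizing_sequence_general fun I => E (φ I)).imp fun _ hf => ⟨φ, hf⟩
end

section
/- Let H be a bounded self-adjoint operator on a complex Hilbert space whose spectrum is a countable subset of ℂ. Then H has pure point spectrum, i.e., the closed linear span of the eigenvectors of H is the whole space. -/
/-!
The continuous functional calculus of a normal operator `H` is a representation `φ` of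
`C(spectrum ℂ H, ℂ)`. For a vector `x ≠ 0`, the functions `f` with `φ f x = 0` form a proper closed
ideal, hence are exactly the functions vanishing on a nonempty closed set `S`, the support of `x`.
When the spectrum is countable, the Baire category theorem provides an isolated point `l` of `S`.
If `f l ≠ 0` and `f` vanishes on the rest of `S`, then `(g - g l) * (star f * f)` vanishes on `S`
for every `g`, so `φ (star f * f) x` is an eigenvector of `H` with eigenvalue `l`, and its inner
product with `x` is `‖φ f x‖ ^ 2 ≠ 0`. Thus no nonzero vector is orthogonal to all eigenvectors.
-/

open Filter ContinuousMap
open scoped InnerProductSpace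

theorem exists_isOpen_singleton_of_countable {X : Type*} [TopologicalSpace X] [T1Space X]
    [BaireSpace X] [Countable X] [Nonempty X] : ∃ x : X, IsOpen {x} := by
  obtain ⟨x, hx⟩ := nonempty_interior_of_iUnion_of_closed (fun x : X ↦ isClosed_singleton (x := x))
    (Set.iUnion_of_singleton X)
  have interior_eq : interior {x} = {x} := hx.subset_singleton_iff.mp interior_subset
  exact ⟨x, interior_eq ▸ isOpen_interior⟩

theorem exists_mem_not_accPt_of_isCompact_of_countable {X : Type*} [TopologicalSpace X] [T2Space X]
    {s : Set X} (hs : IsCompact s) (hcount : s.Countable) (hne : s.Nonempty) :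
    ∃ x ∈ s, ¬AccPt x (𝓟 s) := by
  have := isCompact_iff_compactSpace.mp hs
  have := hcount.to_subtype
  have := hne.to_subtype
  obtain ⟨⟨x, hx⟩, hopen⟩ := exists_isOpen_singleton_of_countable (X := s)
  obtain ⟨U, hU, hUx⟩ := isOpen_induced_iff.mp hopen
  have mem_iff (y : s) : y.1 ∈ U ↔ y = ⟨x, hx⟩ := Set.ext_iff.mp hUx y
  refine ⟨x, hx, fun hacc ↦ ?_⟩
  obtain ⟨y, ⟨hyU, hys⟩, hyx⟩ :=
    accPt_iff_nhds.mp hacc U (hU.mem_nhds ((mem_iff ⟨x, hx⟩).mpr rfl))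
  exact hyx (congrArg Subtype.val ((mem_iff ⟨y, hys⟩).mp hyU))

theorem exists_continuousMap_ne_zero_forall_mem_eq_zero_of_not_accPt (𝕜 : Type*) [RCLike 𝕜]
    {X : Type*} [TopologicalSpace X] [CompactSpace X] [T2Space X] {s : Set X} {l : X}
    (hl : ¬AccPt l (𝓟 s)) : ∃ f : C(X, 𝕜), f l ≠ 0 ∧ ∀ z ∈ s, z ≠ l → f z = 0 := by
  simp only [accPt_iff_nhds, not_forall, not_exists, not_and, not_not] at hl
  obtain ⟨U, hU, hUs⟩ := hl
  have l_mem : l ∈ setOfIdeal (idealOfSet 𝕜 U) := by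
    rwa [setOfIdeal_ofSet_eq_interior, mem_interior_iff_mem_nhds]
  obtain ⟨f, hfU, hfl⟩ := mem_setOfIdeal.mp l_mem
  exact ⟨f, hfl, fun z hz hzl ↦ mem_idealOfSet.mp hfU fun hzU ↦ hzl (hUs z ⟨hzU, hz⟩)⟩

section VectorSupport

variable {𝕜 X E : Type*} [RCLike 𝕜] [TopologicalSpace X]
  [NormedAddCommGroup E] [InnerProductSpace 𝕜 E] [CompleteSpace E]
  (φ : C(X, 𝕜) →⋆ₐ[𝕜] (E →L[𝕜] E)) (x : E)

/-- The ideal of functions whose operators in the representation `φ` annihilate `x`. -/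
noncomputable def vectorAnnihilator : Ideal C(X, 𝕜) :=
  (Ideal.torsionOf (E →L[𝕜] E) E x).comap φ

/-- The support of the vector `x` in the representation `φ`: the common zeros of the functions whose
operators annihilate `x`. It plays the role of the support of the spectral measure of `x`. -/
noncomputable def vectorSupport : Set X :=
  (setOfIdeal (vectorAnnihilator φ x))ᶜ

theorem isClosed_vectorSupport : IsClosed (vectorSupport φ x) :=
  (setOfIdeal_open _).isClosed_compl

variable {φ}

theorem isClosed_vectorAnnihilator (hφ : Continuous φ) :
    IsClosed (vectorAnnihilator φ x : Set C(X, 𝕜)) :=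
  isClosed_eq (hφ.clm_apply continuous_const) continuous_const

variable {x} [CompactSpace X] [T2Space X]

theorem apply_eq_zero_iff_forall_mem_vectorSupport (hφ : Continuous φ) {f : C(X, 𝕜)} :
    φ f x = 0 ↔ ∀ z ∈ vectorSupport φ x, f z = 0 := by
  change f ∈ vectorAnnihilator φ x ↔ _
  rw [← idealOfSet_ofIdeal_isClosed (isClosed_vectorAnnihilator x hφ), mem_idealOfSet]
  rfl

theorem apply_eq_apply_iff_eqOn_vectorSupport (hφ : Continuous φ) {f g : C(X, 𝕜)} :
    φ f x = φ g x ↔ Set.EqOn f g (vectorSupport φ x) := by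
  rw [← sub_eq_zero, ← _root_.sub_apply, ← map_sub,
    apply_eq_zero_iff_forall_mem_vectorSupport hφ]
  simp only [ContinuousMap.sub_apply, sub_eq_zero, Set.EqOn]

theorem vectorSupport_nonempty (hφ : Continuous φ) (hx : x ≠ 0) : (vectorSupport φ x).Nonempty := by
  rw [Set.nonempty_iff_ne_empty]
  intro hempty
  have map_one_apply : φ 1 x = 0 :=
    (apply_eq_zero_iff_forall_mem_vectorSupport hφ).mpr (by simp [hempty])
  exact hx (by simpa using map_one_apply)

theorem exists_forall_apply_eq_smul_of_not_accPt_vectorSupport (hφ : Continuous φ) {l : X}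
    (hl : l ∈ vectorSupport φ x) (hacc : ¬AccPt l (𝓟 (vectorSupport φ x))) :
    ∃ ψ : E, (∀ g : C(X, 𝕜), φ g ψ = g l • ψ) ∧ ⟪ψ, x⟫_𝕜 ≠ 0 := by
  obtain ⟨f, hfl, hf⟩ := exists_continuousMap_ne_zero_forall_mem_eq_zero_of_not_accPt 𝕜 hacc
  refine ⟨φ (star f * f) x, fun g ↦ ?_, ?_⟩
  · have eqOn_support :
        Set.EqOn ⇑(g * (star f * f)) ⇑(g l • (star f * f)) (vectorSupport φ x) := by
      intro z hz
      obtain rfl | hzl := eq_or_ne z l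
      · simp
      · simp [hf z hz hzl]
    simpa using (apply_eq_apply_iff_eqOn_vectorSupport hφ).mpr eqOn_support
  · have inner_eq : ⟪φ (star f * f) x, x⟫_𝕜 = ⟪φ f x, φ f x⟫_𝕜 := by
      rw [map_mul, map_star, ContinuousLinearMap.star_eq_adjoint, mul_apply_eq_comp,
        ContinuousLinearMap.adjoint_inner_left]
    rw [inner_eq, inner_self_ne_zero]
    exact fun hfx ↦ hfl ((apply_eq_zero_iff_forall_mem_vectorSupport hφ).mp hfx l hl)

theorem exists_forall_apply_eq_smul_of_countable [Countable X] (hφ : Continuous φ) (hx : x ≠ 0) :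
    ∃ (l : X) (ψ : E), (∀ g : C(X, 𝕜), φ g ψ = g l • ψ) ∧ ⟪ψ, x⟫_𝕜 ≠ 0 := by
  obtain ⟨l, hl, hacc⟩ := exists_mem_not_accPt_of_isCompact_of_countable
    (isClosed_vectorSupport φ x).isCompact (Set.to_countable _) (vectorSupport_nonempty hφ hx)
  exact ⟨l, exists_forall_apply_eq_smul_of_not_accPt_vectorSupport hφ hl hacc⟩

end VectorSupport

section NormalOperator

variable {𝓗 : Type*} [NormedAddCommGroup 𝓗] [InnerProductSpace ℂ 𝓗] [CompleteSpace 𝓗]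
  {H : 𝓗 →L[ℂ] 𝓗}

theorem exists_apply_eq_smul_inner_ne_zero_of_countable_spectrum (hH : IsStarNormal H)
    (hcount : (spectrum ℂ H).Countable) {x : 𝓗} (hx : x ≠ 0) :
    ∃ (μ : ℂ) (ψ : 𝓗), H ψ = μ • ψ ∧ ⟪ψ, x⟫_ℂ ≠ 0 := by
  have := hcount.to_subtype
  have := isCompact_iff_compactSpace.mp (spectrum.isCompact (𝕜 := ℂ) H)
  obtain ⟨l, ψ, heigen, hinner⟩ :=
    exists_forall_apply_eq_smul_of_countable (cfcHom_continuous (R := ℂ) hH) hx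
  refine ⟨l, ψ, ?_, hinner⟩
  simpa [cfcHom_id hH] using heigen (.restrict (spectrum ℂ H) (.id ℂ))

theorem countable_spectrum_implies_purePoint_general (hH : IsStarNormal H)
    (hcount : (spectrum ℂ H).Countable) :
    (Submodule.span ℂ {ψ : 𝓗 | ψ ≠ 0 ∧ ∃ μ : ℂ, H ψ = μ • ψ}).topologicalClosure = ⊤ := by
  rw [Submodule.topologicalClosure_eq_top_iff, Submodule.eq_bot_iff]
  intro x hx
  by_contra hx0
  obtain ⟨μ, ψ, heigen, hinner⟩ :=
    exists_apply_eq_smul_inner_ne_zero_of_countable_spectrum hH hcount hx0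
  have hψ : ψ ≠ 0 := by
    rintro rfl
    exact hinner (inner_zero_left x)
  exact hinner ((Submodule.mem_orthogonal _ _).mp hx ψ (Submodule.subset_span ⟨hψ, μ, heigen⟩))

end NormalOperator

/-- A bounded self-adjoint operator whose spectrum is countable has pure
point spectrum: the closed linear span of its eigenvectors is the whole space. -/
theorem countable_spectrum_implies_purePoint
    {𝓗 : Type*} [NormedAddCommGroup 𝓗] [InnerProductSpace ℂ 𝓗] [CompleteSpace 𝓗]
    (H : 𝓗 →L[ℂ] 𝓗) (hH : IsSelfAdjoint H) (hcount : (spectrum ℂ H).Countable) :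
    (Submodule.span ℂ {ψ : 𝓗 | ψ ≠ 0 ∧ ∃ μ : ℂ, H ψ = μ • ψ}).topologicalClosure = ⊤ :=
  countable_spectrum_implies_purePoint_general hH.isStarNormal hcount
end

section
/- Let H be a bounded self-adjoint operator on a complex Hilbert space and let ε > 0. Then there exists a bounded self-adjoint operator T with ‖H − T‖ ≤ ε (operator norm) such that the spectrum of T is countable; in particular T has pure point spectrum. -/
/-!
Write a self-adjoint operator as `H = S |H|` with `S` a self-adjoint unitary, the sign of `H`.
Since `0 ≤ |H| ≤ ‖H‖`, the operator `|H|` is within `‖H‖ / 2` of the scalar `‖H‖ / 2`, so `H` is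
within `‖H‖ / 2` of `(‖H‖ / 2) S`. Iterating on the remainder expands `H` in binary digits, with
error `‖H‖ / 2 ^ n` after `n` steps. All the signs that occur commute and are roots of `X ^ 2 - 1`,
so the approximants are algebraic over the scalars. An algebraic operator has finite spectrum, and
a normal operator with finite spectrum is diagonalized by the indicator functions of the points of
its spectrum.
-/

section Algebraic

variable {R 𝕜 A : Type*} [CommRing R] [Field 𝕜] [Ring A] [Algebra R A] [Algebra 𝕜 A]

open scoped IsMulCommutative in
theorem isIntegral_add_of_commute {a b : A} (hab : Commute a b) (ha : IsIntegral R a)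
    (hb : IsIntegral R b) : IsIntegral R (a + b) := by
  have hcomm : ∀ x ∈ ({a, b} : Set A), ∀ y ∈ ({a, b} : Set A), x * y = y * x := by
    rintro x (rfl | rfl) y (rfl | rfl)
    exacts [rfl, hab, hab.symm, rfl]
  have := Algebra.isMulCommutative_adjoin R hcomm
  let B := Algebra.adjoin R ({a, b} : Set A)
  have isIntegral_coe_iff (x : B) : IsIntegral R (x : A) ↔ IsIntegral R x :=
    isIntegral_algHom_iff B.val Subtype.val_injective
  let a' : B := ⟨a, Algebra.subset_adjoin (by simp)⟩
  let b' : B := ⟨b, Algebra.subset_adjoin (by simp)⟩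
  exact (isIntegral_coe_iff (a' + b')).2
    (((isIntegral_coe_iff a').1 ha).add ((isIntegral_coe_iff b').1 hb))

theorem finite_spectrum_of_isIntegral {a : A} (ha : IsIntegral 𝕜 a) :
    (spectrum 𝕜 a).Finite := by
  nontriviality A
  refine (Polynomial.finite_setOfPred_isRoot (minpoly.ne_zero ha)).subset fun z hz => ?_
  simpa using spectrum.subset_polynomial_aeval a (minpoly 𝕜 a) ⟨z, hz, rfl⟩

end Algebraic

theorem span_eigenvectors_eq_iSup_eigenspace {R M : Type*} [CommRing R] [AddCommGroup M]
    [Module R M] (f : Module.End R M) :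
    Submodule.span R {v : M | v ≠ 0 ∧ ∃ μ : R, f v = μ • v} = ⨆ μ : R, f.eigenspace μ := by
  apply le_antisymm
  · rw [Submodule.span_le]
    rintro v ⟨-, μ, hv⟩
    exact Submodule.mem_iSup_of_mem μ (Module.End.mem_eigenspace_iff.2 hv)
  · refine iSup_le fun μ v hv => ?_
    rcases eq_or_ne v 0 with rfl | hv0
    · exact zero_mem _
    · exact Submodule.subset_span ⟨hv0, μ, Module.End.mem_eigenspace_iff.1 hv⟩

theorem norm_sub_algebraMap_half_le {A : Type*} [CStarAlgebra A] [PartialOrder A]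
    [StarOrderedRing A] {a : A} {r : ℝ} (ha : 0 ≤ a) (har : ‖a‖ ≤ r) :
    ‖a - algebraMap ℝ A (r / 2)‖ ≤ r / 2 := by
  have hr : 0 ≤ r := (norm_nonneg a).trans har
  have spectrum_le : ∀ x ∈ spectrum ℝ a, x ≤ r :=
    (le_algebraMap_iff_spectrum_le (ha := ha.isSelfAdjoint)).1
      ((CStarAlgebra.norm_le_iff_le_algebraMap a hr).1 har)
  have eq_cfc : a - algebraMap ℝ A (r / 2) = cfc (fun x : ℝ => x - r / 2) a := by
    rw [cfc_sub (fun x : ℝ => x) (fun _ => r / 2) a, cfc_id' ℝ a, cfc_const (r / 2) a]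
  rw [eq_cfc]
  refine norm_cfc_le (by positivity) fun x hx => abs_le.2 ⟨?_, ?_⟩
  · linarith [spectrum_nonneg_of_nonneg ha hx]
  · linarith [spectrum_le x hx]

theorem commute_starProjection_ker {𝕜 E : Type*} [RCLike 𝕜] [NormedAddCommGroup E]
    [InnerProductSpace 𝕜 E] [CompleteSpace E] {F A : E →L[𝕜] E} (hFA : Commute F A)
    (hFA' : Commute F (star A)) : Commute (F.ker).starProjection A := by
  have ker_invariant {B : E →L[𝕜] E} (hFB : Commute F B) :
      F.ker ∈ Module.End.invtSubmodule (B : E →ₗ[𝕜] E) := by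
    intro v hv
    have hFv : F v = 0 := hv
    change F (B v) = 0
    rw [← mul_apply_eq_comp, hFB.eq, mul_apply_eq_comp, hFv, map_zero]
  rw [ContinuousLinearMap.IsIdempotentElem.commute_iff (F.ker).isIdempotentElem_starProjection,
    Submodule.range_starProjection, Submodule.ker_starProjection]
  exact ⟨ker_invariant hFA,
    ContinuousLinearMap.orthogonal_mem_invtSubmodule (ker_invariant hFA')⟩

section SelfAdjoint

variable {𝓗 : Type*} [NormedAddCommGroup 𝓗] [InnerProductSpace ℂ 𝓗] [CompleteSpace 𝓗]

theorem iSup_eigenspace_eq_top_of_finite_spectrum (T : 𝓗 →L[ℂ] 𝓗) [IsStarNormal T]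
    (hT : (spectrum ℂ T).Finite) : ⨆ μ : ℂ, Module.End.eigenspace (T : 𝓗 →ₗ[ℂ] 𝓗) μ = ⊤ := by
  let Q (μ : ℂ) : 𝓗 →L[ℂ] 𝓗 := cfc (fun z : ℂ => if z = μ then 1 else 0) T
  have mul_Q (μ : ℂ) : T * Q μ = μ • Q μ := by
    have id_mul : T * Q μ = cfc (fun z : ℂ => z * if z = μ then 1 else 0) T := by
      rw [cfc_mul (fun z : ℂ => z) _ T (hT.continuousOn _) (hT.continuousOn _), cfc_id' ℂ T]
    rw [id_mul, ← cfc_smul μ _ T (hT.continuousOn _)]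
    exact cfc_congr fun z _ => by by_cases hz : z = μ <;> simp [hz]
  have sum_Q : ∑ μ ∈ hT.toFinset, Q μ = 1 := by
    rw [← cfc_sum _ T _ fun _ _ => hT.continuousOn _, ← cfc_one ℂ T]
    exact cfc_congr fun z hz => by simpa using hz
  refine eq_top_iff.2 fun v _ => ?_
  have hv : v = ∑ μ ∈ hT.toFinset, Q μ v := by
    rw [← sum_apply, sum_Q, one_apply_eq_self]
  rw [hv]
  refine Submodule.sum_mem _ fun μ _ => Submodule.mem_iSup_of_mem μ ?_
  exact Module.End.mem_eigenspace_iff.2 (DFunLike.congr_fun (mul_Q μ) v)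

/-- The sign of a self-adjoint operator `H`, with value `1` on `ker H`: it is `1` on the kernel of
the negative part `H⁻` and `-1` on its orthogonal complement. For other `H` it is `1`, because
then `H⁻ = 0` by convention. -/
noncomputable def signOperator (H : 𝓗 →L[ℂ] 𝓗) : 𝓗 →L[ℂ] 𝓗 :=
  2 * (H⁻.ker).starProjection - 1

namespace signOperator

protected theorem isSelfAdjoint (H : 𝓗 →L[ℂ] 𝓗) : IsSelfAdjoint (signOperator H) := by
  rw [signOperator, two_mul]
  exact ((isSelfAdjoint_starProjection _).add (isSelfAdjoint_starProjection _)).sub (.one _)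

theorem mem_unitary (H : 𝓗 →L[ℂ] 𝓗) : signOperator H ∈ unitary (𝓗 →L[ℂ] 𝓗) :=
  isStarProjection_starProjection.two_mul_sub_one_mem_unitary

theorem mul_self (H : 𝓗 →L[ℂ] 𝓗) : signOperator H * signOperator H = 1 := by
  simpa only [(signOperator.isSelfAdjoint H).star_eq] using
    Unitary.star_mul_self_of_mem (mem_unitary H)

protected theorem isIntegral (H : 𝓗 →L[ℂ] 𝓗) : IsIntegral ℝ (signOperator H) :=
  .of_pow two_pos (by rw [sq, mul_self]; exact isIntegral_one)

theorem mul_abs {H : 𝓗 →L[ℂ] 𝓗} (hH : IsSelfAdjoint H) :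
    signOperator H * CFC.abs H = H := by
  let P := (H⁻.ker).starProjection
  have proj_mul_posPart : P * H⁺ = H⁺ := by
    ext v
    exact Submodule.starProjection_eq_self_iff.2
      (DFunLike.congr_fun (CFC.negPart_mul_posPart H) v)
  have negPart_mul_proj : H⁻ * P = 0 := by
    ext v
    exact (H⁻.ker).starProjection_apply_mem v
  have proj_mul_negPart : P * H⁻ = 0 := by
    have hP : star P = P := isSelfAdjoint_starProjection _
    simpa only [star_mul, star_zero, hP, (CFC.negPart_nonneg H).isSelfAdjoint.star_eq] using
      congrArg star negPart_mul_proj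
  rw [← CFC.posPart_add_negPart H]
  conv_rhs => rw [← CFC.posPart_sub_negPart H]
  change (2 * P - 1) * (H⁺ + H⁻) = H⁺ - H⁻
  simp only [sub_mul, mul_add, mul_assoc, proj_mul_posPart, proj_mul_negPart]
  noncomm_ring

theorem commute_of_commute {H A : 𝓗 →L[ℂ] 𝓗} (hH : IsSelfAdjoint H) (hHA : Commute H A) :
    Commute (signOperator H) A := by
  have hHA' : Commute H (star A) := by simpa only [hH.star_eq] using hHA.star_star
  have commute_proj : Commute (H⁻.ker).starProjection A :=
    commute_starProjection_ker (hHA.cfcₙ_real _) (hHA'.cfcₙ_real _)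
  exact ((Commute.ofNat_left 2 A).mul_left commute_proj).sub_left (.one_left A)

theorem norm_sub_half_smul_le {H : 𝓗 →L[ℂ] 𝓗} {r : ℝ} (hH : IsSelfAdjoint H) (hr : ‖H‖ ≤ r) :
    ‖H - (r / 2) • signOperator H‖ ≤ r / 2 := by
  have factor : H - (r / 2) • signOperator H =
      signOperator H * (CFC.abs H - algebraMap ℝ (𝓗 →L[ℂ] 𝓗) (r / 2)) := by
    rw [mul_sub, mul_abs hH, Algebra.algebraMap_eq_smul_one, mul_smul_comm, mul_one]
  rw [factor, CStarRing.norm_mem_unitary_mul _ (mem_unitary H)]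
  exact norm_sub_algebraMap_half_le (CFC.abs_nonneg H) (CFC.norm_abs.trans_le hr)

end signOperator

/-- The `n`-th partial sum of the binary expansion of a self-adjoint operator `H`, whose digits are
the signs of the successive remainders. -/
noncomputable def dyadicApprox (H : 𝓗 →L[ℂ] 𝓗) : ℕ → 𝓗 →L[ℂ] 𝓗
  | 0 => 0
  | n + 1 => dyadicApprox H n + (‖H‖ / 2 ^ n / 2) • signOperator (H - dyadicApprox H n)

namespace dyadicApprox

protected theorem isSelfAdjoint (H : 𝓗 →L[ℂ] 𝓗) (n : ℕ) : IsSelfAdjoint (dyadicApprox H n) := by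
  induction n with
  | zero => exact .zero _
  | succ n ih => exact ih.add ((IsSelfAdjoint.all _).smul (signOperator.isSelfAdjoint _))

variable {H : 𝓗 →L[ℂ] 𝓗}

theorem norm_sub_le (hH : IsSelfAdjoint H) (n : ℕ) : ‖H - dyadicApprox H n‖ ≤ ‖H‖ / 2 ^ n := by
  induction n with
  | zero => simp [dyadicApprox]
  | succ n ih =>
    rw [dyadicApprox, ← sub_sub, pow_succ, ← div_div]
    exact signOperator.norm_sub_half_smul_le (hH.sub (dyadicApprox.isSelfAdjoint H n)) ih

theorem commute_of_commute (hH : IsSelfAdjoint H) {A : 𝓗 →L[ℂ] 𝓗} (hHA : Commute H A) (n : ℕ) :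
    Commute (dyadicApprox H n) A := by
  induction n with
  | zero => exact .zero_left A
  | succ n ih =>
    have commute_sign : Commute (signOperator (H - dyadicApprox H n)) A :=
      signOperator.commute_of_commute (hH.sub (dyadicApprox.isSelfAdjoint H n)) (hHA.sub_left ih)
    exact ih.add_left (commute_sign.smul_left _)

protected theorem isIntegral (hH : IsSelfAdjoint H) (n : ℕ) : IsIntegral ℝ (dyadicApprox H n) := by
  induction n with
  | zero => exact isIntegral_zero
  | succ n ih =>
    have commute_remainder : Commute (H - dyadicApprox H n) (dyadicApprox H n) :=
      (commute_of_commute hH (.refl H) n).symm.sub_left (.refl _)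
    have commute_sign :=
      signOperator.commute_of_commute (hH.sub (dyadicApprox.isSelfAdjoint H n)) commute_remainder
    exact isIntegral_add_of_commute (commute_sign.symm.smul_right _) ih
      ((signOperator.isIntegral _).smul _)

theorem finite_spectrum (hH : IsSelfAdjoint H) (n : ℕ) :
    (spectrum ℂ (dyadicApprox H n)).Finite :=
  finite_spectrum_of_isIntegral (dyadicApprox.isIntegral hH n).tower_top

end dyadicApprox

end SelfAdjoint

/-- Operators with countable spectrum (hence with pure point spectrum)
are dense in the bounded self-adjoint operators: every bounded self-adjoint operator `H`
can be approximated within `ε` in operator norm by a bounded self-adjoint operator `T`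
with countable spectrum. -/
theorem purePoint_dense_in_selfAdjoint
    {𝓗 : Type*} [NormedAddCommGroup 𝓗] [InnerProductSpace ℂ 𝓗] [CompleteSpace 𝓗]
    (H : 𝓗 →L[ℂ] 𝓗) (hH : IsSelfAdjoint H) (ε : ℝ) (hε : 0 < ε) :
    ∃ T : 𝓗 →L[ℂ] 𝓗, IsSelfAdjoint T ∧ ‖H - T‖ ≤ ε ∧
      (spectrum ℂ T).Countable ∧
      (Submodule.span ℂ {ψ : 𝓗 | ψ ≠ 0 ∧ ∃ μ : ℂ, T ψ = μ • ψ}).topologicalClosure = ⊤ := by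
  obtain ⟨n, hn⟩ := pow_unbounded_of_one_lt (‖H‖ / ε) (one_lt_two (α := ℝ))
  have hT : IsSelfAdjoint (dyadicApprox H n) := dyadicApprox.isSelfAdjoint H n
  have hspec : (spectrum ℂ (dyadicApprox H n)).Finite := dyadicApprox.finite_spectrum hH n
  have hnorm : ‖H - dyadicApprox H n‖ ≤ ε :=
    (dyadicApprox.norm_sub_le hH n).trans ((div_lt_comm₀ hε (by positivity)).1 hn).le
  refine ⟨dyadicApprox H n, hT, hnorm, hspec.countable, ?_⟩
  have := hT.isStarNormal
  have span_eq_top :=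
    (span_eigenvectors_eq_iSup_eigenspace (dyadicApprox H n : 𝓗 →ₗ[ℂ] 𝓗)).trans
      (iSup_eigenspace_eq_top_of_finite_spectrum (dyadicApprox H n) hspec)
  exact top_unique (span_eq_top.ge.trans (Submodule.le_topologicalClosure _))
end

section
/- Let μ be the product measure on [0,1]^ℕ of countably many copies of Lebesgue measure on the unit interval [0,1]. Then for μ-almost every sequence x : ℕ → [0,1], the sequence x is uniformly distributed: for all real numbers a, b with 0 ≤ a ≤ b ≤ 1, the proportion (1/N)·card{i ∈ ℕ : i < N and a ≤ x_i ≤ b} tends to b − a as N → ∞. -/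
open MeasureTheory Filter

/-!
By the strong law of large numbers, a fixed measurable set is visited by almost every sequence with
the right frequency. The exceptional null set depends on the set visited, so only countably many
sets can be treated at once; we take the finite unions of members of a countable basis. They exhaust
every open set in measure, so simultaneously for all open sets `U` the visit frequency is eventually
above any number less than the measure of `U`. Applied to the interior of `S` and to the interior of
`Sᶜ`, this lower bound pins down the frequency of every set `S` with null boundary, in particular of
every interval.
-/

open ProbabilityTheory Set Function Topology

section VisitFrequency

variable {E : Type*} {x : ℕ → E} {S T : Set E} {N : ℕ}

/-- The proportion of the first `N` terms of the sequence `x` that lie in `S`. It takes the junk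
value `0` at `N = 0`. -/
noncomputable def visitFrequency (x : ℕ → E) (S : Set E) (N : ℕ) : ℝ :=
  (Nat.card {i : ℕ | i < N ∧ x i ∈ S} : ℝ) / N

lemma visitFrequency_eq_sum_indicator (x : ℕ → E) (S : Set E) (N : ℕ) :
    visitFrequency x S N = (∑ i ∈ Finset.range N, S.indicator (1 : E → ℝ) (x i)) / N := by
  classical
  have visits_eq : {i : ℕ | i < N ∧ x i ∈ S} = ({i ∈ Finset.range N | x i ∈ S} : Finset ℕ) := by
    ext i
    simp
  rw [visitFrequency, visits_eq, Nat.card_coe_set_eq, ncard_coe_finset, Finset.card_filter]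
  simp [indicator_apply]

lemma visitFrequency_mono (hST : S ⊆ T) : visitFrequency x S N ≤ visitFrequency x T N := by
  simp only [visitFrequency_eq_sum_indicator]
  gcongr
  exact zero_le_one' ℝ

lemma visitFrequency_compl (hN : N ≠ 0) :
    visitFrequency x Sᶜ N = 1 - visitFrequency x S N := by
  simp only [visitFrequency_eq_sum_indicator, indicator_compl, Pi.sub_apply, Pi.one_apply,
    Finset.sum_sub_distrib, Finset.sum_const, Finset.card_range, nsmul_eq_mul, mul_one]
  rw [sub_div, div_self (Nat.cast_ne_zero.mpr hN)]

end VisitFrequency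

theorem ae_tendsto_visitFrequency {Ω E : Type*} [MeasurableSpace Ω] [MeasurableSpace E]
    {P : Measure Ω} {ν : Measure E} [IsFiniteMeasure ν] {X : ℕ → Ω → E}
    (hlaw : ∀ i, HasLaw (X i) ν P) (hindep : Pairwise ((· ⟂ᵢ[P] ·) on X))
    {S : Set E} (hS : MeasurableSet S) :
    ∀ᵐ ω ∂P, Tendsto (visitFrequency (X · ω) S) atTop (𝓝 (ν.real S)) := by
  let visits : E → ℝ := S.indicator 1
  have measurable_visits : Measurable visits := measurable_one.indicator hS
  have expectation : P[visits ∘ X 0] = ν.real S := by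
    rw [(hlaw 0).integral_comp measurable_visits.aestronglyMeasurable, integral_indicator_one hS]
  have integrable : Integrable (visits ∘ X 0) P := by
    have : Integrable visits (P.map (X 0)) := by
      rw [(hlaw 0).map_eq]
      exact (integrable_const 1).indicator hS
    exact this.comp_aemeasurable (hlaw 0).aemeasurable
  have identDistrib (i : ℕ) : IdentDistrib (visits ∘ X i) (visits ∘ X 0) P P :=
    ((hlaw i).identDistrib (hlaw 0)).comp measurable_visits
  have strong_law := strong_law_ae_real (fun i ↦ visits ∘ X i) integrable
    (fun _ _ hij ↦ (hindep hij).comp measurable_visits measurable_visits) identDistrib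
  rw [expectation] at strong_law
  filter_upwards [strong_law] with ω hω
  exact hω.congr fun N ↦ (visitFrequency_eq_sum_indicator _ S N).symm

lemma exists_finite_subset_lt_measure_sUnion {E : Type*} [MeasurableSpace E] (ν : Measure E)
    {C : Set (Set E)} (hC : C.Countable) {c : ENNReal} (hc : c < ν (⋃₀ C)) :
    ∃ F ⊆ C, F.Finite ∧ c < ν (⋃₀ F) := by
  let finiteSubfamilies : Set (Set (Set E)) := {F | F.Finite ∧ F ⊆ C}
  have sUnion_eq : ⋃₀ C = ⋃ F ∈ finiteSubfamilies, ⋃₀ F := by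
    refine Subset.antisymm (sUnion_subset fun s hs ↦ ?_)
      (iUnion₂_subset fun F hF ↦ sUnion_subset_sUnion hF.2)
    have singleton_mem : {s} ∈ finiteSubfamilies :=
      ⟨finite_singleton s, singleton_subset_iff.mpr hs⟩
    simpa only [sUnion_singleton] using subset_biUnion_of_mem (u := sUnion) singleton_mem
  have directed : DirectedOn ((· ⊆ ·) on sUnion) finiteSubfamilies := fun F hF G hG ↦
    ⟨F ∪ G, ⟨hF.1.union hG.1, union_subset hF.2 hG.2⟩,
      sUnion_subset_sUnion subset_union_left, sUnion_subset_sUnion subset_union_right⟩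
  rw [sUnion_eq, measure_biUnion_eq_iSup (countable_ofPred_finite_subset hC) directed] at hc
  obtain ⟨F, ⟨F_finite, F_subset⟩, hF⟩ := lt_biSup_iff.mp hc
  exact ⟨F, F_subset, F_finite, hF⟩

lemma exists_finite_subset_lt_measureReal_sUnion {E : Type*} [MeasurableSpace E] (ν : Measure E)
    [IsFiniteMeasure ν] {C : Set (Set E)} (hC : C.Countable) {c : ℝ} (hc : c < ν.real (⋃₀ C)) :
    ∃ F ⊆ C, F.Finite ∧ c < ν.real (⋃₀ F) := by
  rcases lt_or_ge c 0 with c_neg | c_nonneg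
  · exact ⟨∅, empty_subset C, finite_empty, c_neg.trans_le measureReal_nonneg⟩
  · simp only [measureReal_def,
      ← ENNReal.ofReal_lt_iff_lt_toReal c_nonneg (measure_ne_top ν _)] at hc ⊢
    exact exists_finite_subset_lt_measure_sUnion ν hC hc

section Equidistribution

variable {E : Type*} [TopologicalSpace E] [MeasurableSpace E] {ν : Measure E} {x : ℕ → E}

/-- The sequence `x` is equidistributed with respect to `ν`: it visits every set `S` with
`ν`-null boundary with asymptotic frequency `ν S`. This is uniform distribution when
`ν` is Lebesgue measure on `[0,1]`; the restriction on `S` is what an arbitrary space has in place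
of intervals. -/
def IsEquidistributed (ν : Measure E) (x : ℕ → E) : Prop :=
  ∀ S : Set E, ν (frontier S) = 0 → Tendsto (visitFrequency x S) atTop (𝓝 (ν.real S))

variable [OpensMeasurableSpace E]

theorem isEquidistributed_of_forall_isOpen_eventually_lt [IsProbabilityMeasure ν]
    (hopen : ∀ U, IsOpen U → ∀ c < ν.real U, ∀ᶠ N in atTop, c < visitFrequency x U N) :
    IsEquidistributed ν x := by
  have eventually_lt {S : Set E} (hS : ν (frontier S) = 0) {c : ℝ} (hc : c < ν.real S) :
      ∀ᶠ N in atTop, c < visitFrequency x S N := by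
    rw [← measureReal_congr (interior_ae_eq_of_null_frontier hS)] at hc
    filter_upwards [hopen _ isOpen_interior c hc] with N hN
    exact hN.trans_le (visitFrequency_mono interior_subset)
  intro S hS
  refine tendsto_order.mpr ⟨fun c hc ↦ eventually_lt hS hc, fun c hc ↦ ?_⟩
  have hc_compl : 1 - c < ν.real Sᶜ := by
    rw [probReal_compl_eq_one_sub₀ (nullMeasurableSet_of_null_frontier hS)]
    exact sub_lt_sub_left hc 1
  filter_upwards [eventually_lt (by rwa [frontier_compl]) hc_compl, eventually_ne_atTop 0]
    with N hN N_ne_zero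
  rw [visitFrequency_compl N_ne_zero] at hN
  exact (sub_lt_sub_iff_left 1).mp hN

theorem ae_isEquidistributed [SecondCountableTopology E] [IsProbabilityMeasure ν]
    {Ω : Type*} [MeasurableSpace Ω] {P : Measure Ω} {X : ℕ → Ω → E}
    (hlaw : ∀ i, HasLaw (X i) ν P) (hindep : Pairwise ((· ⟂ᵢ[P] ·) on X)) :
    ∀ᵐ ω ∂P, IsEquidistributed ν (X · ω) := by
  let B : Set (Set E) := TopologicalSpace.countableBasis E
  have hB : TopologicalSpace.IsTopologicalBasis B := TopologicalSpace.isBasis_countableBasis E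
  have B_countable : B.Countable := TopologicalSpace.countable_countableBasis E
  have ae_finite_unions : ∀ᵐ ω ∂P, ∀ F ∈ {F : Set (Set E) | F.Finite ∧ F ⊆ B},
      Tendsto (visitFrequency (X · ω) (⋃₀ F)) atTop (𝓝 (ν.real (⋃₀ F))) :=
    (ae_ball_iff (countable_ofPred_finite_subset B_countable)).mpr fun F hF ↦
      ae_tendsto_visitFrequency hlaw hindep
        (isOpen_sUnion fun s hs ↦ hB.isOpen (hF.2 hs)).measurableSet
  filter_upwards [ae_finite_unions] with ω hω
  refine isEquidistributed_of_forall_isOpen_eventually_lt fun U hU c hc ↦ ?_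
  obtain ⟨C, C_subset, rfl⟩ := hB.open_eq_sUnion hU
  obtain ⟨F, F_subset, F_finite, hF⟩ :=
    exists_finite_subset_lt_measureReal_sUnion ν (B_countable.mono C_subset) hc
  have tendsto_F := hω F ⟨F_finite, F_subset.trans C_subset⟩
  filter_upwards [tendsto_F.eventually_const_lt hF] with N hN
  exact hN.trans_le (visitFrequency_mono (sUnion_subset_sUnion F_subset))

end Equidistribution

lemma measure_frontier_Icc_eq_zero {α : Type*} [LinearOrder α] [TopologicalSpace α]
    [OrderClosedTopology α] [MeasurableSpace α] (ν : Measure α) [NullSingletonClass ν] (a b : α) :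
    ν (frontier (Icc a b)) = 0 := by
  refine measure_mono_null (t := {a, b}) ?_ ((toFinite _).measure_zero ν)
  rw [isClosed_Icc.frontier_eq]
  rintro y ⟨⟨hay, hyb⟩, y_notMem⟩
  by_contra! y_ne
  rw [mem_insert_iff, mem_singleton_iff, not_or] at y_ne
  exact y_notMem (interior_maximal Ioo_subset_Icc_self isOpen_Ioo
    ⟨hay.lt_of_ne' y_ne.1, hyb.lt_of_ne y_ne.2⟩)

lemma eq_infinitePi_of_initial_cylinders {E : ℕ → Type*} [∀ i, MeasurableSpace (E i)]
    (ν : ∀ i, Measure (E i)) [∀ i, IsProbabilityMeasure (ν i)] {μ : Measure (∀ i, E i)}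
    (hμ : ∀ s : ∀ i, Set (E i), (∀ i, MeasurableSet (s i)) →
      ∀ N : ℕ, μ {x | ∀ i < N, x i ∈ s i} = ∏ i ∈ Finset.range N, ν i (s i)) :
    μ = Measure.infinitePi ν := by
  classical
  refine Measure.eq_infinitePi ν fun I t ht ↦ ?_
  obtain ⟨N, I_subset⟩ := I.exists_nat_subset_range
  let s (i : ℕ) : Set (E i) := if i ∈ I then t i else univ
  have pi_eq : (I : Set ℕ).pi t = {x | ∀ i < N, x i ∈ s i} := by
    ext x
    refine ⟨fun hx i _ ↦ ?_, fun hx i hi ↦ ?_⟩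
    · by_cases hi : i ∈ I
      · simpa only [s, if_pos hi] using hx i hi
      · simp only [s, if_neg hi, mem_univ]
    · simpa only [s, if_pos (Finset.mem_coe.mp hi)] using
        hx i (Finset.mem_range.mp (I_subset hi))
  have hs (i : ℕ) : MeasurableSet (s i) := by
    by_cases hi : i ∈ I <;> simp [s, hi, ht i]
  calc μ ((I : Set ℕ).pi t) = ∏ i ∈ Finset.range N, ν i (s i) := by rw [pi_eq, hμ s hs N]
    _ = ∏ i ∈ I, ν i (s i) :=
      (Finset.prod_subset I_subset fun i _ hi ↦ by simp [s, hi]).symm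
    _ = ∏ i ∈ I, ν i (t i) := Finset.prod_congr rfl fun i hi ↦ by simp [s, hi]

theorem almost_every_sequence_uniformly_distributed_general {E : Type*} [TopologicalSpace E]
    [SecondCountableTopology E] [MeasurableSpace E] [OpensMeasurableSpace E]
    (ν : Measure E) [IsProbabilityMeasure ν] (μ : Measure (ℕ → E))
    (hμ : ∀ s : ℕ → Set E, (∀ i, MeasurableSet (s i)) →
      ∀ N : ℕ, μ {x | ∀ i < N, x i ∈ s i} = ∏ i ∈ Finset.range N, ν (s i)) :
    ∀ᵐ x ∂μ, IsEquidistributed ν x := by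
  rw [eq_infinitePi_of_initial_cylinders (E := fun _ ↦ E) (fun _ ↦ ν) hμ]
  have hindep : iIndepFun (fun i (x : ℕ → E) ↦ x i) (Measure.infinitePi fun _ ↦ ν) :=
    iIndepFun_infinitePi (X := fun _ ↦ id) fun _ ↦ measurable_id
  exact ae_isEquidistributed
    (fun i ↦ (measurePreserving_eval_infinitePi (fun _ ↦ ν) i).hasLaw) fun _ _ ↦ hindep.indepFun

lemma IsEquidistributed.tendsto_visitFrequency_Icc {x : ℕ → unitInterval}
    (hx : IsEquidistributed volume x) {a b : unitInterval} (hab : a ≤ b) :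
    Tendsto (visitFrequency x (Icc a b)) atTop (𝓝 (b - a : ℝ)) := by
  have volume_Icc : volume.real (Icc a b) = (b - a : ℝ) := by
    rw [measureReal_def, unitInterval.volume_Icc, ENNReal.toReal_ofReal (sub_nonneg.mpr hab)]
  simpa only [volume_Icc] using hx (Icc a b) (measure_frontier_Icc_eq_zero volume a b)

/-- Let `μ` be the product, over countably many copies indexed by `ℕ`, of
the Lebesgue probability measure on the unit interval `[0,1]` (characterized here as a
probability measure on `ℕ → [0,1]` giving every cylinder set its product measure). Then
`μ`-almost every sequence `x : ℕ → [0,1]` is uniformly distributed: for all `0 ≤ a ≤ b ≤ 1`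
the proportion of the first `N` terms lying in `[a,b]` tends to `b - a` as `N → ∞`. -/
theorem almost_every_sequence_uniformly_distributed
    (μ : Measure (ℕ → unitInterval)) [IsProbabilityMeasure μ]
    (hμ : ∀ s : ℕ → Set unitInterval, (∀ i, MeasurableSet (s i)) →
      ∀ N : ℕ, μ {x | ∀ i < N, x i ∈ s i} = ∏ i ∈ Finset.range N, volume (s i)) :
    ∀ᵐ x ∂μ, ∀ a b : ℝ, 0 ≤ a → a ≤ b → b ≤ 1 →
      Tendsto
        (fun N : ℕ =>
          (Nat.card {i : ℕ | i < N ∧ a ≤ (x i : ℝ) ∧ (x i : ℝ) ≤ b} : ℝ) / (N : ℝ))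
        atTop (nhds (b - a)) := by
  filter_upwards [almost_every_sequence_uniformly_distributed_general volume μ hμ]
    with x hx a b ha hab hb
  exact hx.tendsto_visitFrequency_Icc (a := ⟨a, ha, hab.trans hb⟩) (b := ⟨b, ha.trans hab, hb⟩) hab
end
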